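/- Let a_n = (1 − 1/(2n))^n and ε(n) = (ln a_n + ln 2)/(n·ln(2n) − ln 2) for integers n ≥ 2. Then lim_{n → ∞} (n · ln n) · ε(n) = ln 2 − 1/2. -/

import Mathlib

open Filter

/-- `a_n = (1 - 1/(2n))^n`. -/
noncomputable def aSeq (n : ℕ) : ℝ := (1 - 1 / (2 * (n : ℝ))) ^ n

/-- `ε(n) = (ln a_n + ln 2) / (n ln(2n) - ln 2)`. -/
noncomputable def epsSeq (n : ℕ) : ℝ :=
  (Real.log (aSeq n) + Real.log 2) / ((n : ℝ) * Real.log (2 * (n : ℝ)) - Real.log 2)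

theorem tendsto_n_log_n_mul_eps :
    Tendsto (fun n : ℕ => ((n : ℝ) * Real.log (n : ℝ)) * epsSeq n) atTop
      (nhds (Real.log 2 - 1 / 2)) := by
  have ha : Tendsto aSeq atTop (nhds (Real.exp (-(1/2)))) := by
    refine (Real.tendsto_one_add_div_pow_exp (-(1/2))).congr (fun n => ?_)
    unfold aSeq
    congr 1
    simp only [one_div, mul_inv, div_eq_mul_inv]; ring
  have hl : Tendsto (fun n => Real.log (aSeq n)) atTop (nhds (-(1/2))) := by
    have := ha.log (Real.exp_pos _).ne'
    rwa [Real.log_exp] at this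
  have hn : Tendsto (fun n : ℕ => ((n : ℝ))⁻¹) atTop (nhds 0) :=
    tendsto_inv_atTop_zero.comp tendsto_natCast_atTop_atTop
  have hlog : Tendsto (fun n : ℕ => (Real.log (n : ℝ))⁻¹) atTop (nhds 0) :=
    tendsto_inv_atTop_zero.comp (Real.tendsto_log_atTop.comp tendsto_natCast_atTop_atTop)
  have hr : Tendsto (fun n : ℕ => (1 + Real.log 2 * (Real.log (n : ℝ))⁻¹
      - Real.log 2 * ((n : ℝ)⁻¹ * (Real.log (n : ℝ))⁻¹))⁻¹) atTop (nhds 1) := by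
    have := (((hlog.const_mul (Real.log 2)).const_add 1).sub
      ((hn.mul hlog).const_mul (Real.log 2))).inv₀ (by simp)
    simpa using this
  have hm := hr.mul (hl.add_const (Real.log 2))
  rw [show (1:ℝ) * (-(1/2) + Real.log 2) = Real.log 2 - 1/2 by ring] at hm
  refine hm.congr' ?_
  filter_upwards [eventually_ge_atTop 2] with n h2
  have h2' : (2:ℝ) ≤ n := by exact_mod_cast h2
  have hL : 0 < Real.log (n:ℝ) := Real.log_pos (by linarith)
  have hn0 : (n:ℝ) ≠ 0 := by linarith
  have e : (n : ℝ) * Real.log (2 * (n : ℝ)) - Real.log 2 = (n * Real.log n) *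
      (1 + Real.log 2 * (Real.log (n : ℝ))⁻¹
      - Real.log 2 * ((n : ℝ)⁻¹ * (Real.log (n : ℝ))⁻¹)) := by
    rw [Real.log_mul two_ne_zero hn0]
    field_simp
    ring
  unfold epsSeq
  rw [e, div_eq_mul_inv, mul_inv]
  have hp : (n : ℝ) * Real.log n ≠ 0 := mul_ne_zero hn0 hL.ne'
  generalize (1 + Real.log 2 * (Real.log (n : ℝ))⁻¹
      - Real.log 2 * ((n : ℝ)⁻¹ * (Real.log (n : ℝ))⁻¹))⁻¹ = x
  field_simp
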